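/- Let G be a finite abelian group with |G| ≥ 3 and let H be a proper subgroup of G. Then SD(G) > SD(H). -/

import Mathlib

open Multiset

/-- A sequence (finite multiset) over `G` is zero-sumfree if every nonempty
subsequence has nonzero sum. -/
def IsZeroSumfree {G : Type*} [AddCommMonoid G] (S : Multiset G) : Prop :=
  ∀ T ≤ S, T ≠ 0 → T.sum ≠ 0

/-- A minimal zero-sum sequence: a nonempty sequence with sum zero all of whose
nonempty proper subsequences have nonzero sum. -/
def IsMinimalZeroSum {G : Type*} [AddCommMonoid G] (S : Multiset G) : Prop :=
  S ≠ 0 ∧ S.sum = 0 ∧ ∀ T ≤ S, T ≠ 0 → T ≠ S → T.sum ≠ 0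

/-- The cumulated multiplicity of level `ℓ` of a sequence:
`cm_ℓ(S) = Σ_{g ∈ G} max {0, v_g(S) − ℓ}`. -/
noncomputable def cmul {G : Type*} [AddCommMonoid G] (ℓ : ℕ) (S : Multiset G) : ℕ :=
  letI := Classical.decEq G
  ∑ g ∈ S.toFinset, (S.count g - ℓ)

/-- `SD_{(k,ℓ)}(G)`: the maximum length of a minimal zero-sum sequence `S` over `G`
with `cm_ℓ(S) ≤ k`. -/
noncomputable def SDpair (G : Type*) [AddCommMonoid G] (k ℓ : ℕ) : ℕ :=
  sSup {m | ∃ S : Multiset G, IsMinimalZeroSum S ∧ cmul ℓ S ≤ k ∧ Multiset.card S = m}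

/-- `SD_k(G)`: the `k`-th Strong Davenport constant. -/
noncomputable def SDk (G : Type*) [AddCommMonoid G] (k : ℕ) : ℕ := SDpair G k 1

/-- The Strong Davenport constant `SD(G) = SD_0(G)`. -/
noncomputable def SD (G : Type*) [AddCommMonoid G] : ℕ := SDk G 0

/-- The Olson constant `Ol(G) = SD_1(G)`. -/
noncomputable def Ol (G : Type*) [AddCommMonoid G] : ℕ := SDk G 1

/-- `ol_k(G)`: the maximum length of a zero-sumfree sequence `S` over `G` with
`cm(S) ≤ k`. -/
noncomputable def olk (G : Type*) [AddCommMonoid G] (k : ℕ) : ℕ :=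
  sSup {m | ∃ S : Multiset G, IsZeroSumfree S ∧ cmul 1 S ≤ k ∧ Multiset.card S = m}

/-- `Ol_k(G)`: the smallest integer `ℓ` such that every sequence `S` over `G` with
`cm(S) ≤ k` and `|S| ≥ ℓ` has a nonempty zero-sum subsequence. -/
noncomputable def Olk (G : Type*) [AddCommMonoid G] (k : ℕ) : ℕ :=
  sInf {m | ∀ S : Multiset G, cmul 1 S ≤ k → m ≤ Multiset.card S →
    ∃ T, T ≤ S ∧ T ≠ 0 ∧ T.sum = 0}

/-- The Davenport constant `D(G)`: the maximum length of a minimal zero-sum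
sequence over `G`. -/
noncomputable def DavenportD (G : Type*) [AddCommMonoid G] : ℕ :=
  sSup {m | ∃ S : Multiset G, IsMinimalZeroSum S ∧ Multiset.card S = m}

/-!
Let `g ∉ H`. Replacing one term `s` of a minimal zero-sum sequence over `H` by the two terms `g`
and `s - g` gives a longer minimal zero-sum sequence: modulo `H` the new terms are `g` and `-g`,
both nonzero, so a zero-sum subsequence contains both or neither of them. If the old sequence has
distinct terms, so does the new one unless `g + g = s`, and as soon as there are two terms to choose
from, this can be avoided. Only `SD H = 1` remains. If some `a : G` satisfies `a + a ≠ 0`, split the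
sequence `0` into `a, -a`; otherwise split the sequence `a, a` with `a ≠ 0` by a further element.
-/

section CumulatedMultiplicity

variable {G : Type*} [AddCommMonoid G]

theorem cmul_eq_sum [DecidableEq G] (ℓ : ℕ) (S : Multiset G) :
    cmul ℓ S = ∑ g ∈ S.toFinset, (S.count g - ℓ) := by
  rw [cmul]
  congr!

theorem cmul_eq_zero_iff [DecidableEq G] {ℓ : ℕ} {S : Multiset G} :
    cmul ℓ S = 0 ↔ ∀ g, S.count g ≤ ℓ := by
  simp only [cmul_eq_sum, Finset.sum_eq_zero_iff, mem_toFinset, Nat.sub_eq_zero_iff_le]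
  exact forall_congr' fun g =>
    ⟨fun h => le_of_not_gt fun hlt => hlt.not_ge (h (count_pos.1 (Nat.zero_lt_of_lt hlt))),
      fun h _ => h⟩

theorem cmul_one_eq_zero_iff {S : Multiset G} : cmul 1 S = 0 ↔ S.Nodup := by
  classical
  rw [cmul_eq_zero_iff, nodup_iff_count_le_one]

theorem card_le_natCard_mul_add_cmul [Finite G] (ℓ : ℕ) (S : Multiset G) :
    card S ≤ Nat.card G * ℓ + cmul ℓ S := by
  classical
  let := Fintype.ofFinite G
  calc card S = ∑ g ∈ S.toFinset, S.count g := (toFinset_sum_count_eq S).symm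
    _ ≤ ∑ g ∈ S.toFinset, (ℓ + (S.count g - ℓ)) := Finset.sum_le_sum fun _ _ => le_add_tsub
    _ = S.toFinset.card * ℓ + cmul ℓ S := by
      rw [Finset.sum_add_distrib, Finset.sum_const, smul_eq_mul, cmul_eq_sum]
    _ ≤ Nat.card G * ℓ + cmul ℓ S := by
      rw [Nat.card_eq_fintype_card]
      gcongr
      exact Finset.card_le_univ _

end CumulatedMultiplicity

theorem multiset_le_cons_iff {α : Type*} {a : α} {S T : Multiset α} :
    T ≤ a ::ₘ S ↔ T ≤ S ∨ ∃ T' ≤ S, T = a ::ₘ T' := by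
  simp only [← mem_powerset, powerset_cons, mem_add, mem_map, eq_comm]

theorem exists_le_map_eq_of_le_map {α β : Type*} {f : α → β} {S : Multiset α} {T : Multiset β}
    (hT : T ≤ S.map f) : ∃ T' ≤ S, T'.map f = T := by
  induction S using Multiset.induction generalizing T with
  | empty => exact ⟨0, le_rfl, (Multiset.le_zero.1 hT).symm⟩
  | cons a S ih =>
    rw [map_cons] at hT
    rcases multiset_le_cons_iff.1 hT with hTS | ⟨T, hTS, rfl⟩
    · obtain ⟨T', hT', rfl⟩ := ih hTS
      exact ⟨T', hT'.trans (le_cons_self S a), rfl⟩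
    · obtain ⟨T', hT', rfl⟩ := ih hTS
      exact ⟨a ::ₘ T', (cons_le_cons_iff a).2 hT', map_cons f a T'⟩

section Monoid

variable {M N : Type*} [AddCommMonoid M] [AddCommMonoid N]

theorem isMinimalZeroSum_singleton_zero : IsMinimalZeroSum ({0} : Multiset M) :=
  ⟨singleton_ne_zero 0, sum_singleton 0, fun _ hT hne hproper =>
    absurd (le_singleton.1 hT) (not_or.2 ⟨hne, hproper⟩)⟩

theorem IsMinimalZeroSum.eq_of_le {S T : Multiset M} (hS : IsMinimalZeroSum S) (hT : T ≤ S)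
    (hne : T ≠ 0) (hsum : T.sum = 0) : T = S :=
  by_contra fun hproper => hS.2.2 T hT hne hproper hsum

theorem IsMinimalZeroSum.map {S : Multiset M} (hS : IsMinimalZeroSum S) {f : M →+ N}
    (hf : Function.Injective f) : IsMinimalZeroSum (S.map f) := by
  refine ⟨mt map_eq_zero.1 hS.1, ?_, fun T hT hne hproper hsum => ?_⟩
  · rw [← map_multiset_sum, hS.2.1, _root_.map_zero]
  · obtain ⟨T, hTS, rfl⟩ := exists_le_map_eq_of_le_map hT
    rw [← map_multiset_sum, map_eq_zero_iff f hf] at hsum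
    exact hproper (congrArg _ (hS.eq_of_le hTS (mt map_eq_zero.2 hne) hsum))

theorem isGreatest_SDpair [Finite M] (k : ℕ) {ℓ : ℕ} (hℓ : 1 ≤ ℓ) :
    IsGreatest {m | ∃ S : Multiset M, IsMinimalZeroSum S ∧ cmul ℓ S ≤ k ∧ card S = m}
      (SDpair M k ℓ) := by
  classical
  have hbdd : BddAbove
      {m | ∃ S : Multiset M, IsMinimalZeroSum S ∧ cmul ℓ S ≤ k ∧ card S = m} := by
    refine ⟨Nat.card M * ℓ + k, ?_⟩
    rintro _ ⟨S, -, hk, rfl⟩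
    exact (card_le_natCard_mul_add_cmul ℓ S).trans (Nat.add_le_add_left hk _)
  have hzero : cmul ℓ ({0} : Multiset M) = 0 :=
    cmul_eq_zero_iff.2 fun g => (nodup_iff_count_le_one.1 (nodup_singleton 0) g).trans hℓ
  exact ⟨Nat.sSup_mem ⟨1, {0}, isMinimalZeroSum_singleton_zero, by simp [hzero]⟩ hbdd,
    fun _ hm => le_csSup hbdd hm⟩

theorem isGreatest_SD [Finite M] :
    IsGreatest {m | ∃ S : Multiset M, IsMinimalZeroSum S ∧ S.Nodup ∧ card S = m} (SD M) := by
  simpa only [SD, SDk, Nat.le_zero, cmul_one_eq_zero_iff] using isGreatest_SDpair (M := M) 0 le_rfl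

end Monoid

section Group

variable {G : Type*} [AddCommGroup G] {H : AddSubgroup G} {s g : G} {R S : Multiset G}

theorem IsMinimalZeroSum.cons_cons_sub (hS : IsMinimalZeroSum (s ::ₘ R))
    (hH : ∀ x ∈ s ::ₘ R, x ∈ H) (hg : g ∉ H) : IsMinimalZeroSum (g ::ₘ (s - g) ::ₘ R) := by
  obtain ⟨hs, hR⟩ := forall_mem_cons.1 hH
  have sum_mem {T : Multiset G} (hT : T ≤ R) : T.sum ∈ H :=
    H.multiset_sum_mem T fun x hx => hR x (mem_of_le hT hx)
  have sum_split (T : Multiset G) : (g ::ₘ (s - g) ::ₘ T).sum = (s ::ₘ T).sum := by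
    simp only [sum_cons, ← add_assoc, add_sub_cancel]
  refine ⟨cons_ne_zero, (sum_split R).trans hS.2.1, fun T hT hne hproper hsum => ?_⟩
  obtain (hTR | ⟨T, hTR, rfl⟩) | ⟨T, hTR | ⟨T, hTR, rfl⟩, rfl⟩ :
      (T ≤ R ∨ ∃ T' ≤ R, T = (s - g) ::ₘ T') ∨
        ∃ T', (T' ≤ R ∨ ∃ T'' ≤ R, T' = (s - g) ::ₘ T'') ∧ T = g ::ₘ T' := by
    simpa only [multiset_le_cons_iff] using hT
  · have hTS := hS.eq_of_le (hTR.trans (le_cons_self R s)) hne hsum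
    exact (lt_cons_self R s).not_ge (hTS ▸ hTR)
  · have hg_eq : g = s + T.sum := by
      rw [sum_cons, sub_add_eq_add_sub, sub_eq_zero] at hsum
      exact hsum.symm
    exact hg (hg_eq ▸ H.add_mem hs (sum_mem hTR))
  · have hg_eq : g = -T.sum := eq_neg_of_add_eq_zero_left ((sum_cons g T).symm.trans hsum)
    exact hg (hg_eq ▸ H.neg_mem (sum_mem hTR))
  · have hTS := hS.eq_of_le ((cons_le_cons_iff s).2 hTR) cons_ne_zero
      ((sum_split T).symm.trans hsum)
    exact hproper (by rw [(cons_inj_right s).1 hTS])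

theorem nodup_cons_cons_sub (hR : R.Nodup) (hH : ∀ x ∈ s ::ₘ R, x ∈ H) (hg : g ∉ H)
    (hgs : g + g ≠ s) : (g ::ₘ (s - g) ::ₘ R).Nodup := by
  obtain ⟨hs, hRH⟩ := forall_mem_cons.1 hH
  have hsub : s - g ∉ H := fun h => hg (by simpa only [sub_sub_cancel] using H.sub_mem hs h)
  rw [nodup_cons, nodup_cons, mem_cons, not_or]
  exact ⟨⟨mt eq_sub_iff_add_eq.1 hgs, mt (hRH g) hg⟩, mt (hRH _) hsub, hR⟩

theorem IsMinimalZeroSum.card_cons_lt_SD [Finite G] (hS : IsMinimalZeroSum (s ::ₘ R))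
    (hR : R.Nodup) (hH : ∀ x ∈ s ::ₘ R, x ∈ H) (hg : g ∉ H) (hgs : g + g ≠ s) :
    card (s ::ₘ R) < SD G := by
  have hle : card (g ::ₘ (s - g) ::ₘ R) ≤ SD G :=
    isGreatest_SD.2 ⟨_, hS.cons_cons_sub hH hg, nodup_cons_cons_sub hR hH hg hgs, rfl⟩
  simpa only [card_cons, Nat.succ_le_iff] using hle

theorem IsMinimalZeroSum.card_lt_SD [Finite G] (hS : IsMinimalZeroSum S) (hnodup : S.Nodup)
    (hcard : 1 < card S) (hSH : ∀ x ∈ S, x ∈ H) (hH : H ≠ ⊤) : card S < SD G := by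
  obtain ⟨g, hg⟩ : ∃ g, g ∉ H := not_forall.1 (mt H.eq_top_iff'.2 hH)
  obtain ⟨s, hs, hsg⟩ : ∃ s ∈ S, s ≠ g + g :=
    Finset.exists_mem_ne (s := ⟨S, hnodup⟩) hcard (g + g)
  obtain ⟨R, rfl⟩ := exists_cons_of_mem hs
  exact hS.card_cons_lt_SD (nodup_cons.1 hnodup).2 hSH hg hsg.symm

theorem isMinimalZeroSum_neg_pair {a : G} (ha : a ≠ 0) : IsMinimalZeroSum {a, -a} := by
  have hsplit := (isMinimalZeroSum_singleton_zero (M := G)).cons_cons_sub (H := ⊥) (R := 0)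
    (g := a) (by simp) (by simpa using ha)
  rwa [zero_sub] at hsplit

theorem exists_notMem_zmultiples_of_two_nsmul_eq_zero {a : G} (ha : 2 • a = 0)
    (hG : 2 < Nat.card G) : ∃ b, b ∉ AddSubgroup.zmultiples a := by
  by_contra! hall
  have hcard : Nat.card G = addOrderOf a := by
    rw [← Nat.card_zmultiples, (AddSubgroup.eq_top_iff' _).2 hall, AddSubgroup.card_top]
  exact hG.not_ge (hcard ▸ addOrderOf_le_of_nsmul_eq_zero two_pos ha)

theorem one_lt_SD [Finite G] (hG : 2 < Nat.card G) : 1 < SD G := by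
  by_cases htorsion : ∀ a : G, a + a = 0
  · have : Nontrivial G := Finite.one_lt_card_iff_nontrivial.1 (one_lt_two.trans hG)
    obtain ⟨a, ha⟩ := exists_ne (0 : G)
    obtain ⟨b, hb⟩ :=
      exists_notMem_zmultiples_of_two_nsmul_eq_zero (two_nsmul a ▸ htorsion a) hG
    have hlt : card {a, -a} < SD G :=
      (isMinimalZeroSum_neg_pair ha).card_cons_lt_SD (nodup_singleton _)
        (by simp) hb (htorsion b ▸ ha.symm)
    exact one_lt_two.trans hlt
  · obtain ⟨a, ha⟩ := not_forall.1 htorsion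
    have ha_ne : a ∉ (⊥ : AddSubgroup G) := by
      rintro rfl
      exact ha (add_zero 0)
    exact isMinimalZeroSum_singleton_zero.card_cons_lt_SD nodup_zero (by simp) ha_ne ha

end Group

/-- If `G` is a finite abelian group with `|G| ≥ 3` and `H` is a proper
subgroup of `G`, then `SD(G) > SD(H)`. -/
theorem strong_davenport_strict_mono (G : Type*) [AddCommGroup G] [Fintype G]
    (hG : 3 ≤ Fintype.card G) (H : AddSubgroup G) (hH : H ≠ ⊤) :
    SD H < SD G := by
  obtain ⟨S, hS, hnodup, hcard⟩ := (isGreatest_SD (M := H)).1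
  rcases le_or_gt (SD H) 1 with hle | hlt
  · exact hle.trans_lt (one_lt_SD (Nat.card_eq_fintype_card (α := G) ▸ hG))
  · rw [← hcard] at hlt ⊢
    have hmap : card (S.map H.subtype) < SD G :=
      (hS.map H.subtype_injective).card_lt_SD (hnodup.map H.subtype_injective)
        (by rwa [card_map]) (by simp +contextual) hH
    rwa [card_map] at hmap
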